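/- Let N ≥ 1 be an integer and C₀ > 1. Let a ∈ C^∞(𝕋³;ℝ) and let ξ : ℝ³ → ℝ³ be smooth with ξ(x + 2πv) − ξ(x) ∈ 2πℤ³ for all x ∈ ℝ³ and v ∈ ℤ³ (so that x ↦ e^{i k·ξ(x)} is well defined on 𝕋³ for every k ∈ ℤ³), and assume that for every x the matrix ∇ξ(x) satisfies ‖∇ξ(x)‖ ≤ C₀ and is invertible with ‖(∇ξ(x))^{−1}‖ ≤ C₀. Then there is a constant C = C(C₀, N), independent of k, such that for every k ∈ ℤ³ \ {0}, |∫_{𝕋³} a(x) e^{i k·ξ(x)} dx| ≤ C (‖a‖_N + ‖a‖₀ ‖∇ξ‖_N) / |k|^N. -/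

import Mathlib

open MeasureTheory

noncomputable section

/-- Points of `ℝ³`. -/
abbrev V3 : Type := Fin 3 → ℝ

/-- The fundamental domain `[-π, π]³` of the torus `𝕋³`. -/
def T3 : Set V3 := Set.Icc (fun _ => -Real.pi) (fun _ => Real.pi)

/-- A function on `ℝ³` is (`2π`-)periodic, i.e. descends to the torus `𝕋³`. -/
def PerSpace {α : Type*} (f : V3 → α) : Prop :=
  ∀ (x : V3) (v : Fin 3 → ℤ), f (fun i => x i + 2 * Real.pi * v i) = f x

open Finset in
/-- A finite log-convex sequence is bounded by the maximum of its end values. -/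
theorem le_max_endpoints_of_sq_le_mul (N : ℕ) (u : ℕ → ℝ) (hu : ∀ j, 0 ≤ u j)
    (h : ∀ j, j + 2 ≤ N → u (j + 1) ^ 2 ≤ u j * u (j + 2)) {j : ℕ} (hj : j ≤ N) :
    u j ≤ max (u 0) (u N) := by
  classical
  obtain ⟨m, hm, hmax⟩ := exists_max_image (range (N + 1)) u ⟨0, by simp⟩
  have hex : ∃ i, i ≤ N ∧ u i = u m := ⟨m, by simpa [Nat.lt_succ_iff] using hm, rfl⟩
  have hle : ∀ i, i ≤ N → u i ≤ u m := fun i hi => hmax i (by simpa [Nat.lt_succ_iff] using hi)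
  obtain ⟨hpN, hpm⟩ := Nat.find_spec hex
  have hmin := fun q (hq : q < Nat.find hex) => Nat.find_min hex hq
  generalize Nat.find hex = p at hpN hpm hmin
  refine (hle j hj).trans ?_
  rcases Nat.eq_zero_or_pos p with rfl | hp
  · exact hpm ▸ le_max_left _ _
  rcases hpN.eq_or_lt with rfl | hlt
  · exact hpm ▸ le_max_right _ _
  obtain ⟨q, rfl⟩ : ∃ q, p = q + 1 := ⟨p - 1, by omega⟩
  have hq : u q < u m := lt_of_le_of_ne (hle q (by omega)) fun he =>
    hmin q (by omega) ⟨by omega, he⟩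
  have h1 := h q (by omega)
  have h2 := hle (q + 2) (by omega)
  rw [hpm] at h1
  nlinarith [hu q, hu (q + 2), mul_nonneg (hu q) (sub_nonneg.2 h2)]

section GrowthBound

variable {E F G H : Type*} [NormedAddCommGroup E] [NormedSpace ℝ E]
  [NormedAddCommGroup F] [NormedSpace ℝ F] [NormedAddCommGroup G] [NormedSpace ℝ G]
  [NormedAddCommGroup H] [NormedSpace ℝ H]

/-- Landau's inequality: the first derivative is controlled by the function and the Lipschitz
constant of the first derivative. -/
theorem sq_norm_fderiv_le_of_lipschitz {g : E → F} (hg : Differentiable ℝ g) {M₀ M₂ : ℝ}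
    (h₀ : ∀ x, ‖g x‖ ≤ M₀) (h₂ : ∀ x y, ‖fderiv ℝ g y - fderiv ℝ g x‖ ≤ M₂ * ‖y - x‖)
    (hM₂ : 0 ≤ M₂) (x : E) : ‖fderiv ℝ g x‖ ^ 2 ≤ 8 * M₀ * M₂ := by
  have hM₀ : 0 ≤ M₀ := (norm_nonneg _).trans (h₀ 0)
  have key : ∀ h : ℝ, 0 < h → ‖fderiv ℝ g x‖ * h ≤ 2 * M₀ + M₂ * (h * h) := by
    intro h hh
    have : ‖fderiv ℝ g x‖ ≤ (2 * M₀ + M₂ * (h * h)) / h := by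
      refine ContinuousLinearMap.opNorm_le_of_unit_norm (𝕜 := ℝ) (by positivity) fun v hv => ?_
      have hball : ∀ y ∈ Metric.closedBall x h,
          ‖fderiv ℝ g y - fderiv ℝ g x‖ ≤ M₂ * h := fun y hy =>
        (h₂ x y).trans (mul_le_mul_of_nonneg_left (mem_closedBall_iff_norm.1 hy) hM₂)
      have hnv : ‖x + h • v - x‖ = h := by
        rw [add_sub_cancel_left, norm_smul, hv, Real.norm_of_nonneg hh.le, mul_one]
      have h3 := (convex_closedBall x h).norm_image_sub_le_of_norm_fderiv_le'
        (fun y _ => hg y) hball (Metric.mem_closedBall_self hh.le)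
        (y := x + h • v) (mem_closedBall_iff_norm.2 hnv.le)
      rw [hnv, add_sub_cancel_left, map_smul] at h3
      have h4 : ‖h • fderiv ℝ g x v‖ ≤ ‖g (x + h • v)‖ + ‖g x‖ +
          ‖g (x + h • v) - g x - h • fderiv ℝ g x v‖ := by
        have := norm_sub_le (g (x + h • v) - g x) (g (x + h • v) - g x - h • fderiv ℝ g x v)
        rw [sub_sub_cancel] at this
        linarith [norm_sub_le (g (x + h • v)) (g x)]
      rw [norm_smul, Real.norm_of_nonneg hh.le] at h4
      rw [le_div_iff₀ hh]
      nlinarith [h₀ x, h₀ (x + h • v)]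
    rwa [le_div_iff₀ hh] at this
  have hd := discrim_le_zero (a := M₂) (b := -‖fderiv ℝ g x‖) (c := 2 * M₀) fun h => by
    rcases lt_or_ge 0 h with hh | hh
    · linarith [key h hh]
    · nlinarith [norm_nonneg (fderiv ℝ g x), mul_nonneg hM₂ (mul_self_nonneg h)]
  rw [discrim] at hd
  nlinarith

/-- `f` is smooth and its derivatives of order `j ≤ n` are bounded by `K * lam ^ j`. -/
structure GrowthBound (n : ℕ) (K lam : ℝ) (f : E → F) : Prop where
  contDiff : ContDiff ℝ (⊤ : ℕ∞) f
  bound : ∀ j ≤ n, ∀ x, ‖iteratedFDeriv ℝ j f x‖ ≤ K * lam ^ j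

namespace GrowthBound

variable {n : ℕ} {K L lam : ℝ} {f : E → F} {g : E → G}

theorem norm_le (hf : GrowthBound n K lam f) (x : E) : ‖f x‖ ≤ K := by
  simpa using hf.bound 0 (Nat.zero_le _) x

theorem nonneg (hf : GrowthBound n K lam f) : 0 ≤ K :=
  (norm_nonneg _).trans (hf.norm_le 0)

theorem mono_order {m : ℕ} (hf : GrowthBound n K lam f) (hmn : m ≤ n) : GrowthBound m K lam f :=
  ⟨hf.contDiff, fun j hj => hf.bound j (hj.trans hmn)⟩

theorem mono_const (hf : GrowthBound n K lam f) (hlam : 0 ≤ lam) (hKL : K ≤ L) :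
    GrowthBound n L lam f :=
  ⟨hf.contDiff, fun j hj x =>
    (hf.bound j hj x).trans (mul_le_mul_of_nonneg_right hKL (pow_nonneg hlam j))⟩

theorem fderiv (hf : GrowthBound (n + 1) K lam f) : GrowthBound n (K * lam) lam (fderiv ℝ f) :=
  ⟨hf.contDiff.fderiv_right (by simp), fun j hj x => by
    rw [norm_iteratedFDeriv_fderiv, mul_assoc, ← pow_succ']
    exact hf.bound (j + 1) (by omega) x⟩

theorem of_fderiv (hf : ContDiff ℝ (⊤ : ℕ∞) f) (h0 : ∀ x, ‖f x‖ ≤ K)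
    (h : GrowthBound n (K * lam) lam (_root_.fderiv ℝ f)) : GrowthBound (n + 1) K lam f :=
  ⟨hf, fun j hj x => by
    rcases j with _ | j
    · simpa using h0 x
    · rw [← norm_iteratedFDeriv_fderiv, pow_succ', ← mul_assoc]
      exact h.bound j (by omega) x⟩

theorem clm_comp (T : F →L[ℝ] G) (hf : GrowthBound n K lam f) :
    GrowthBound n (‖T‖ * K) lam (fun x => T (f x)) :=
  ⟨T.contDiff.comp hf.contDiff, fun j hj x => by
    refine (T.norm_iteratedFDeriv_comp_left hf.contDiff.contDiffAt
      (by exact_mod_cast le_top)).trans ?_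
    rw [mul_assoc]
    exact mul_le_mul_of_nonneg_left (hf.bound j hj x) (norm_nonneg _)⟩

theorem bilinear (B : F →L[ℝ] G →L[ℝ] H) (hlam : 0 ≤ lam) (hf : GrowthBound n K lam f)
    (hg : GrowthBound n L lam g) :
    GrowthBound n (2 ^ n * ‖B‖ * K * L) lam (fun x => B (f x) (g x)) :=
  ⟨(B.contDiff.comp hf.contDiff).clm_apply hg.contDiff, fun j hj x => by
    refine (B.norm_iteratedFDeriv_le_of_bilinear hf.contDiff hg.contDiff x
      (n := j) (by exact_mod_cast le_top)).trans ?_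
    have hK := hf.nonneg
    have hL := hg.nonneg
    have hsum : ∑ i ∈ Finset.range (j + 1), (j.choose i : ℝ) * ‖iteratedFDeriv ℝ i f x‖ *
        ‖iteratedFDeriv ℝ (j - i) g x‖ ≤
        ∑ i ∈ Finset.range (j + 1), (j.choose i : ℝ) * (K * L * lam ^ j) := by
      refine Finset.sum_le_sum fun i hi => ?_
      have hij : i ≤ j := Nat.lt_succ_iff.1 (Finset.mem_range.1 hi)
      rw [mul_assoc]
      refine mul_le_mul_of_nonneg_left ?_ (by positivity)
      calc _ ≤ (K * lam ^ i) * (L * lam ^ (j - i)) :=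
            mul_le_mul (hf.bound i (hij.trans hj) x) (hg.bound (j - i) (by omega) x)
              (norm_nonneg _) (by positivity)
        _ = K * L * (lam ^ i * lam ^ (j - i)) := by ring
        _ = K * L * lam ^ j := by rw [← pow_add, Nat.add_sub_cancel' hij]
    have hchoose : ∑ i ∈ Finset.range (j + 1), (j.choose i : ℝ) = 2 ^ j := by
      exact_mod_cast Nat.sum_range_choose j
    rw [← Finset.sum_mul, hchoose] at hsum
    calc _ ≤ ‖B‖ * (2 ^ j * (K * L * lam ^ j)) :=
          mul_le_mul_of_nonneg_left hsum (norm_nonneg B)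
      _ ≤ ‖B‖ * (2 ^ n * (K * L * lam ^ j)) := by gcongr; norm_num
      _ = _ := by ring⟩

/-- Interpolation: bounds on `f` and on its `N`-th derivative bound all intermediate ones. -/
theorem of_interpolation {N : ℕ} (hf : ContDiff ℝ (⊤ : ℕ∞) f) (hlam : 0 < lam)
    (hb : ∀ j ≤ N, ∃ R, ∀ x, ‖iteratedFDeriv ℝ j f x‖ ≤ R)
    (h0 : ∀ x, ‖f x‖ ≤ K) (hN : ∀ x, ‖iteratedFDeriv ℝ N f x‖ ≤ K * lam ^ N) :
    GrowthBound N (3 ^ N ^ 2 * K) lam f := by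
  have hK : 0 ≤ K := (norm_nonneg _).trans (h0 0)
  set M : ℕ → ℝ := fun j => ⨆ x, ‖iteratedFDeriv ℝ j f x‖ with hM
  have hM0 : ∀ j, 0 ≤ M j := fun j => Real.iSup_nonneg fun x => norm_nonneg _
  have hle : ∀ j ≤ N, ∀ x, ‖iteratedFDeriv ℝ j f x‖ ≤ M j := fun j hj x => by
    obtain ⟨R, hR⟩ := hb j hj
    exact le_ciSup (f := fun x => ‖iteratedFDeriv ℝ j f x‖)
      ⟨R, by rintro _ ⟨y, rfl⟩; exact hR y⟩ x
  have hdiff : ∀ j, Differentiable ℝ (iteratedFDeriv ℝ j f) := fun j =>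
    hf.differentiable_iteratedFDeriv (by exact_mod_cast WithTop.coe_lt_top _)
  have hsq : ∀ j, j + 2 ≤ N → M (j + 1) ^ 2 ≤ 8 * M j * M (j + 2) := by
    intro j hj
    have hx : ∀ x, ‖iteratedFDeriv ℝ (j + 1) f x‖ ^ 2 ≤ 8 * M j * M (j + 2) := fun x => by
      rw [← norm_fderiv_iteratedFDeriv]
      refine sq_norm_fderiv_le_of_lipschitz (hdiff j) (hle j (by omega)) (fun x y => ?_)
        (hM0 _) x
      rw [fderiv_iteratedFDeriv]
      refine ((((continuousMultilinearCurryLeftEquiv ℝ (fun _ : Fin (j + 1) => E) F).map_sub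
        _ _).symm ▸ LinearIsometryEquiv.norm_map _ _).le).trans ?_
      exact convex_univ.norm_image_sub_le_of_norm_fderiv_le (𝕜 := ℝ)
        (fun z _ => hdiff (j + 1) z)
        (fun z _ => by rw [norm_fderiv_iteratedFDeriv]; exact hle (j + 2) hj z)
        (Set.mem_univ _) (Set.mem_univ _)
    have h1 : M (j + 1) ≤ √(8 * M j * M (j + 2)) :=
      ciSup_le fun x => Real.le_sqrt_of_sq_le (hx x)
    calc M (j + 1) ^ 2 ≤ √(8 * M j * M (j + 2)) ^ 2 := by gcongr; exact hM0 _
      _ = _ := Real.sq_sqrt (by have := hM0 j; have := hM0 (j + 2); positivity)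
  have hconv := fun j (hj : j ≤ N) =>
    le_max_endpoints_of_sq_le_mul N (fun j => M j * 3 ^ j ^ 2 / lam ^ j)
      (fun j => by have := hM0 j; positivity) (fun j hj => by
        have h8 := hsq j hj
        have hp := mul_nonneg (hM0 j) (hM0 (j + 2))
        calc (M (j + 1) * 3 ^ (j + 1) ^ 2 / lam ^ (j + 1)) ^ 2
            = M (j + 1) ^ 2 * 3 ^ (2 * j ^ 2 + 4 * j + 2) / lam ^ (2 * j + 2) := by
              rw [div_pow, mul_pow, ← pow_mul, ← pow_mul]; ring_nf
          _ ≤ (9 * (M j * M (j + 2))) * 3 ^ (2 * j ^ 2 + 4 * j + 2) / lam ^ (2 * j + 2) := by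
              gcongr; linarith
          _ = M j * 3 ^ j ^ 2 / lam ^ j * (M (j + 2) * 3 ^ (j + 2) ^ 2 / lam ^ (j + 2)) := by
              rw [div_mul_div_comm]; ring_nf) hj
  have hends : max (M 0 * 3 ^ 0 ^ 2 / lam ^ 0) (M N * 3 ^ N ^ 2 / lam ^ N) ≤ 3 ^ N ^ 2 * K := by
    have h3 : (1 : ℝ) ≤ 3 ^ N ^ 2 := one_le_pow₀ (by norm_num)
    have hM0K : M 0 ≤ K := ciSup_le fun x => by simpa using h0 x
    have hMNK : M N ≤ K * lam ^ N := ciSup_le hN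
    refine max_le ?_ ?_
    · simp only [ne_eq, OfNat.ofNat_ne_zero, not_false_eq_true, zero_pow, pow_zero, mul_one,
        div_one]
      nlinarith
    · rw [div_le_iff₀ (by positivity)]
      nlinarith [pow_pos hlam N]
  refine ⟨hf, fun j hj x => (hle j hj x).trans ?_⟩
  have h1 := (hconv j hj).trans hends
  rw [div_le_iff₀ (by positivity)] at h1
  refine le_trans ?_ h1
  exact le_mul_of_one_le_right (hM0 j) (one_le_pow₀ (by norm_num))

variable {R : Type*} [NormedRing R] [NormedAlgebra ℝ R] [CompleteSpace R]

theorem ringInverse_contDiff {A : E → R} (hA : ContDiff ℝ (⊤ : ℕ∞) A)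
    (hu : ∀ x, IsUnit (A x)) : ContDiff ℝ (⊤ : ℕ∞) fun x => Ring.inverse (A x) :=
  contDiff_iff_contDiffAt.2 fun x => by
    obtain ⟨u, hu⟩ := hu x
    exact ContDiffAt.comp x (hu ▸ contDiffAt_ringInverse ℝ u) hA.contDiffAt

set_option maxSynthPendingDepth 3 in
/-- The pointwise inverse of a field of invertible elements with bounded inverses inherits growth
bounds. -/
theorem ringInverse (n : ℕ) (K C : ℝ) : ∃ K', ∀ (A : E → R) (lam : ℝ), 0 ≤ lam →
    GrowthBound n K lam A → (∀ x, IsUnit (A x)) → (∀ x, ‖Ring.inverse (A x)‖ ≤ C) →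
    GrowthBound n K' lam (fun x => Ring.inverse (A x)) := by
  induction n with
  | zero =>
    refine ⟨C, fun A lam _ hA hu hC => ⟨ringInverse_contDiff hA.contDiff hu, fun j hj x => ?_⟩⟩
    obtain rfl : j = 0 := by omega
    simpa using hC x
  | succ n ih =>
    obtain ⟨K', ih⟩ := ih
    set Φ : R →L[ℝ] R →L[ℝ] R →L[ℝ] R := ContinuousLinearMap.mulLeftRight ℝ R
    set Ψ := ContinuousLinearMap.compL ℝ E R R
    refine ⟨max C (2 ^ n * ‖-Ψ‖ * (2 ^ n * ‖Φ‖ * K' * K') * K), fun A lam hlam hA hu hC => ?_⟩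
    have hB := ih A lam hlam (hA.mono_order n.le_succ) hu hC
    have hD := bilinear (-Ψ) hlam (bilinear Φ hlam hB hB) hA.fderiv
    have hfd : (fun x => (-Ψ) (Φ (Ring.inverse (A x)) (Ring.inverse (A x)))
        (_root_.fderiv ℝ A x)) = _root_.fderiv ℝ (fun x => Ring.inverse (A x)) := by
      funext x
      obtain ⟨u, hux⟩ := hu x
      have h1 : HasFDerivAt Ring.inverse (-Φ (Ring.inverse (A x)) (Ring.inverse (A x))) (A x) := by
        rw [← hux, Ring.inverse_unit]
        exact hasFDerivAt_ringInverse u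
      have h2 : HasFDerivAt (fun x => Ring.inverse (A x)) _ x :=
        h1.comp x (hA.contDiff.differentiable (by simp) x).hasFDerivAt
      rw [h2.fderiv]
      ext v
      simp [Ψ]
    rw [hfd] at hD
    refine of_fderiv (ringInverse_contDiff hA.contDiff hu)
      (fun x => (hC x).trans (le_max_left _ _)) (hD.mono_const hlam ?_)
    rw [← mul_assoc]
    exact mul_le_mul_of_nonneg_right (le_max_right _ _) hlam

end GrowthBound

end GrowthBound

/-- The integral over the torus of the divergence of a periodic vector field vanishes. -/
theorem integral_divergence_eq_zero_of_perSpace (F : Fin 3 → V3 → ℂ)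
    (F' : Fin 3 → V3 → V3 →L[ℝ] ℂ) (hF : ∀ i x, HasFDerivAt (F i) (F' i x) x)
    (hc : Continuous fun x => ∑ i, F' i x (Pi.single i 1)) (hper : ∀ i, PerSpace (F i)) :
    ∫ x in T3, ∑ i, F' i x (Pi.single i 1) = 0 := by
  have hle : (fun _ => -Real.pi : V3) ≤ fun _ => Real.pi := fun _ => by
    simpa using Real.pi_pos.le
  rw [T3, integral_divergence_of_hasFDerivAt_off_countable' _ _ hle F F' ∅ Set.countable_empty
    (fun i => (continuous_iff_continuousAt.2 fun x => (hF i x).continuousAt).continuousOn)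
    (fun x _ i => hF i x) (hc.continuousOn.integrableOn_compact isCompact_Icc)]
  refine Finset.sum_eq_zero fun i _ => sub_eq_zero.2 ?_
  congr 1 with y
  rw [← hper i (i.insertNth (-Real.pi) y) (Pi.single i 1)]
  congr 1 with j
  refine Fin.succAboveCases i ?_ (fun l => ?_) j
  · simp only [Fin.insertNth_apply_same, Pi.single_eq_same, Int.cast_one]; ring
  · simp

/-- The trace of a linear map, as a continuous linear functional. -/
def traceCLM : (V3 →L[ℝ] V3) →L[ℝ] ℝ :=
  ∑ i : Fin 3, (ContinuousLinearMap.proj (R := ℝ) (φ := fun _ : Fin 3 => ℝ) i).comp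
    (ContinuousLinearMap.apply ℝ V3 (Pi.single i 1 : V3))

theorem traceCLM_apply (A : V3 →L[ℝ] V3) : traceCLM A = ∑ i, A (Pi.single i 1) i := by
  simp [traceCLM]

/-- A function which changes by constants under lattice translations has periodic derivative. -/
theorem PerSpace.fderiv_of_add_const {F : Type*} [NormedAddCommGroup F] [NormedSpace ℝ F]
    {f : V3 → F} (d : (Fin 3 → ℤ) → F)
    (hf : ∀ (x : V3) (v : Fin 3 → ℤ), f (fun i => x i + 2 * Real.pi * v i) = f x + d v) :
    PerSpace (fderiv ℝ f) := fun x v => by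
  have h1 : (fun y : V3 => f (y + fun i => 2 * Real.pi * v i)) = fun y => f y + d v :=
    funext fun y => hf y v
  have h2 := fderiv_comp_add_right (𝕜 := ℝ) (f := f) (x := x) (fun i => 2 * Real.pi * v i)
  rw [h1, fderiv_add_const] at h2
  exact h2.symm

/-- A phase which is periodic modulo `2πℤ³` has periodic derivative. -/
theorem perSpace_fderiv_of_perSpace_mod {ξ : V3 → V3} (hξ : Continuous ξ)
    (hper : ∀ (x : V3) (v : Fin 3 → ℤ), ∃ w : Fin 3 → ℤ,
      (ξ (fun i => x i + 2 * Real.pi * v i)) = fun i => ξ x i + 2 * Real.pi * w i) :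
    PerSpace (fderiv ℝ ξ) := by
  choose w hw using hper
  have hconst : ∀ x v, w x v = w 0 v := fun x v => by
    refine PreconnectedSpace.constant inferInstance (f := fun x => w x v)
      (continuous_pi fun i => Int.isClosedEmbedding_coe_real.isInducing.continuous_iff.2 ?_)
    have h : ((↑) : ℤ → ℝ) ∘ (fun x => w x v i) =
        fun x => (ξ (fun i => x i + 2 * Real.pi * v i) i - ξ x i) / (2 * Real.pi) := by
      funext x
      rw [hw x v]
      field_simp [Real.pi_ne_zero]
      rw [add_sub_cancel_left]
      simp only [Function.comp_apply]
      ring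
    rw [h]
    fun_prop
  refine PerSpace.fderiv_of_add_const (fun v i => 2 * Real.pi * w 0 v i) fun x v => ?_
  rw [hw x v, hconst]
  rfl

/-- Integration by parts against an oscillating exponential along a field `b` with `∂_b φ = 1`. -/
theorem norm_integral_mul_exp_eq {f φ : V3 → ℝ} {b : V3 → V3} (hf : ContDiff ℝ (⊤ : ℕ∞) f)
    (hb : ContDiff ℝ (⊤ : ℕ∞) b) (hφ : ContDiff ℝ (⊤ : ℕ∞) φ) (hfp : PerSpace f)
    (hbp : PerSpace b) (hφp : PerSpace fun x => Complex.exp (Complex.I * (φ x : ℂ)))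
    (h1 : ∀ x, fderiv ℝ φ x (b x) = 1) :
    ‖∫ x in T3, (f x : ℂ) * Complex.exp (Complex.I * (φ x : ℂ))‖ =
      ‖∫ x in T3, ((traceCLM (fderiv ℝ (fun y => f y • b y) x) : ℝ) : ℂ) *
        Complex.exp (Complex.I * (φ x : ℂ))‖ := by
  set u : V3 → V3 := fun y => f y • b y with hu
  have huc : ContDiff ℝ (⊤ : ℕ∞) u := hf.smul hb
  set e : V3 → ℂ := fun x => Complex.exp (Complex.I * (φ x : ℂ)) with he
  have hec : Continuous e := by have := hφ.continuous; fun_prop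
  have hed : ∀ x, HasFDerivAt e (e x • Complex.I • Complex.ofRealCLM.comp (fderiv ℝ φ x)) x :=
    fun x => ((Complex.ofRealCLM.hasFDerivAt.comp x
      (hφ.differentiable (by simp) x).hasFDerivAt).const_mul Complex.I).cexp
  have hud : ∀ i x, HasFDerivAt (fun y => ((u y i : ℝ) : ℂ)) (Complex.ofRealCLM.comp
      ((ContinuousLinearMap.proj (R := ℝ) (φ := fun _ : Fin 3 => ℝ) i).comp (fderiv ℝ u x))) x :=
    fun i x => Complex.ofRealCLM.hasFDerivAt.comp x
      ((ContinuousLinearMap.proj (R := ℝ) (φ := fun _ : Fin 3 => ℝ) i).hasFDerivAt.comp x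
        (huc.differentiable (by simp) x).hasFDerivAt)
  have hdiv : ∀ x, fderiv ℝ φ x (u x) = ∑ i, u x i * fderiv ℝ φ x (Pi.single i 1) := fun x => by
    conv_lhs => rw [pi_eq_sum_univ' (u x)]
    rw [map_sum]
    simp
  have hsum : ∀ x, ∑ i, ((u x i : ℂ) • (e x • Complex.I • Complex.ofRealCLM.comp (fderiv ℝ φ x)) +
      e x • (Complex.ofRealCLM.comp ((ContinuousLinearMap.proj (R := ℝ)
        (φ := fun _ : Fin 3 => ℝ) i).comp (fderiv ℝ u x)))) (Pi.single i 1) =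
      Complex.I * ((f x : ℂ) * e x) + ((traceCLM (fderiv ℝ u x) : ℝ) : ℂ) * e x := fun x => by
    have hfx : f x = ∑ i, u x i * fderiv ℝ φ x (Pi.single i 1) := by
      rw [← hdiv, hu]
      simp [h1]
    rw [traceCLM_apply]
    conv_rhs => rw [hfx]
    push_cast
    rw [Finset.sum_mul, Finset.mul_sum, Finset.sum_mul, ← Finset.sum_add_distrib]
    refine Finset.sum_congr rfl fun i _ => ?_
    simp
    ring
  have hc1 : Continuous fun x => (f x : ℂ) * e x := by have := hf.continuous; fun_prop
  have hc2 : Continuous fun x => ((traceCLM (fderiv ℝ u x) : ℝ) : ℂ) * e x := by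
    have := huc.continuous_fderiv (by simp)
    fun_prop
  have hzero := integral_divergence_eq_zero_of_perSpace _ _
    (fun i x => (hud i x).mul (hed x))
    (by simp only [hsum]; exact (continuous_const.mul hc1).add hc2)
    (fun i x v => by
      have hux : u (fun i => x i + 2 * Real.pi * v i) = u x := by simp only [hu, hfp x v, hbp x v]
      have hex : e (fun i => x i + 2 * Real.pi * v i) = e x := hφp x v
      simp only [Pi.mul_apply, hux, hex])
  simp only [hsum] at hzero
  have hi1 : IntegrableOn (fun x => (f x : ℂ) * e x) T3 :=
    hc1.continuousOn.integrableOn_compact isCompact_Icc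
  have hi2 : IntegrableOn (fun x => ((traceCLM (fderiv ℝ u x) : ℝ) : ℂ) * e x) T3 :=
    hc2.continuousOn.integrableOn_compact isCompact_Icc
  rw [integral_add (hi1.const_mul _) hi2, integral_const_mul] at hzero
  rw [← norm_neg (∫ x in T3, ((traceCLM (fderiv ℝ u x) : ℝ) : ℂ) * e x),
    ← eq_neg_of_add_eq_zero_left hzero, norm_mul, Complex.norm_I, one_mul]

theorem volume_real_T3 : volume.real T3 = (2 * Real.pi) ^ 3 := by
  rw [Measure.real, T3, Real.volume_Icc_pi_toReal (fun _ => by simpa using Real.pi_pos.le)]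
  simp [two_mul]

/-- Repeated integration by parts: each derivative of `f` gains a factor `L * lam`. -/
theorem norm_integral_mul_exp_le {N : ℕ} {φ : V3 → ℝ} {b : V3 → V3} {L lam : ℝ} (hlam : 0 ≤ lam)
    (hb : GrowthBound N L lam b) (hφ : ContDiff ℝ (⊤ : ℕ∞) φ)
    (hbp : PerSpace b) (hφp : PerSpace fun x => Complex.exp (Complex.I * (φ x : ℂ)))
    (h1 : ∀ x, fderiv ℝ φ x (b x) = 1) {n : ℕ} (hn : n ≤ N) {f : V3 → ℝ} {K : ℝ}
    (hf : GrowthBound n K lam f) (hfp : PerSpace f) :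
    ‖∫ x in T3, (f x : ℂ) * Complex.exp (Complex.I * (φ x : ℂ))‖ ≤
      (2 * Real.pi) ^ 3 * K * (‖traceCLM‖ * 2 ^ N * L * lam) ^ n := by
  induction n generalizing f K with
  | zero =>
    have := norm_setIntegral_le_of_norm_le_const (μ := volume) (s := T3)
      (f := fun x => (f x : ℂ) * Complex.exp (Complex.I * (φ x : ℂ))) (C := K)
      isCompact_Icc.measure_lt_top fun x _ => by
        rw [norm_mul, mul_comm Complex.I, Complex.norm_exp_ofReal_mul_I, mul_one,
          Complex.norm_real]
        exact hf.norm_le x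
    rw [volume_real_T3] at this
    linarith
  | succ n ih =>
    have hK := hf.nonneg
    have hL := hb.nonneg
    rw [norm_integral_mul_exp_eq hf.contDiff hb.contDiff hφ hfp hbp hφp h1]
    have hu : GrowthBound (n + 1) (2 ^ N * K * L) lam fun y => f y • b y := by
      refine (GrowthBound.bilinear (ContinuousLinearMap.lsmul ℝ ℝ) hlam hf
        (hb.mono_order hn)).mono_const hlam ?_
      rw [ContinuousLinearMap.opNorm_lsmul, mul_one]
      gcongr
      norm_num
    have hup : PerSpace fun x => traceCLM (fderiv ℝ (fun y => f y • b y) x) := fun x v =>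
      congrArg traceCLM (PerSpace.fderiv_of_add_const (fun _ => 0)
        (fun x v => by simp only [hfp x v, hbp x v, add_zero]) x v)
    refine (ih (by omega) (hu.fderiv.clm_comp traceCLM) hup).trans_eq ?_
    ring

/-- **Stationary phase estimate.**  Let `a` be smooth and periodic and let `ξ : ℝ³ → ℝ³`
be a smooth phase, periodic modulo `2πℤ³`, with `‖∇ξ‖ ≤ C₀` and `∇ξ` pointwise invertible
with `‖(∇ξ)⁻¹‖ ≤ C₀`.  Then there is `C = C(C₀, N)`, independent of `k`, with
`|∫_{𝕋³} a e^{i k·ξ} dx| ≤ C (‖a‖_N + ‖a‖₀ ‖∇ξ‖_N) / |k|^N` for all `k ∈ ℤ³ \ {0}`. -/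
theorem statement12 (N : ℕ) (hN : 1 ≤ N) (C₀ : ℝ) (hC₀ : 1 < C₀) :
    ∃ C : ℝ, 0 < C ∧
      ∀ a : V3 → ℝ, ContDiff ℝ (⊤ : ℕ∞) a → PerSpace a →
      ∀ ξ : V3 → V3, ContDiff ℝ (⊤ : ℕ∞) ξ →
        (∀ (x : V3) (v : Fin 3 → ℤ), ∃ w : Fin 3 → ℤ,
          (ξ (fun i => x i + 2 * Real.pi * v i)) = fun i => ξ x i + 2 * Real.pi * w i) →
        (∀ x : V3, ‖fderiv ℝ ξ x‖ ≤ C₀) →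
        (∀ x : V3, ∃ B : V3 →L[ℝ] V3,
          (fderiv ℝ ξ x).comp B = ContinuousLinearMap.id ℝ V3 ∧
          B.comp (fderiv ℝ ξ x) = ContinuousLinearMap.id ℝ V3 ∧ ‖B‖ ≤ C₀) →
      ∀ A₀ AN GN : ℝ,
        (∀ x : V3, |a x| ≤ A₀) →
        (∀ x : V3, ∀ n : ℕ, n ≤ N → ‖iteratedFDeriv ℝ n a x‖ ≤ AN) →
        (∀ x : V3, ∀ n : ℕ, n ≤ N →
          ‖iteratedFDeriv ℝ n (fun y => fderiv ℝ ξ y) x‖ ≤ GN) →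
      ∀ k : Fin 3 → ℤ, k ≠ 0 →
        ‖∫ x in T3, (a x : ℂ) * Complex.exp (Complex.I * ((∑ i, (k i : ℝ) * ξ x i : ℝ) : ℂ))‖
          ≤ C * (AN + A₀ * GN) / (Real.sqrt (∑ i, ((k i : ℝ)) ^ 2)) ^ N := by
  obtain ⟨K', hK'⟩ := GrowthBound.ringInverse (E := V3) (R := V3 →L[ℝ] V3) N (3 ^ N ^ 2 * C₀) C₀
  set D : ℝ := ‖traceCLM‖ * 2 ^ N * |K'| with hD
  refine ⟨(2 * Real.pi) ^ 3 * 3 ^ N ^ 2 * D ^ N + 1, by positivity, ?_⟩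
  intro a ha hap ξ hξ hξp hξC hξinv A₀ AN GN hA₀ hAN hGN k hk
  have hA₀0 : 0 ≤ A₀ := (abs_nonneg _).trans (hA₀ 0)
  have hAN0 : 0 ≤ AN := (norm_nonneg _).trans (hAN 0 0 (Nat.zero_le _))
  have hGN0 : 0 ≤ GN := (norm_nonneg _).trans (hGN 0 0 (Nat.zero_le _))
  set κ : ℝ := √(∑ i, (k i : ℝ) ^ 2) with hκ
  have hκsq : κ ^ 2 = ∑ i, (k i : ℝ) ^ 2 := Real.sq_sqrt (by positivity)
  have hkκ : ∀ i, |(k i : ℝ)| ≤ κ := fun i => Real.abs_le_sqrt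
    (Finset.single_le_sum (f := fun i => (k i : ℝ) ^ 2) (fun j _ => sq_nonneg _)
      (Finset.mem_univ i))
  have hκ0 : 0 < κ := by
    obtain ⟨i, hi⟩ := Function.ne_iff.1 hk
    exact (abs_pos.2 (Int.cast_ne_zero.2 hi)).trans_le (hkκ i)
  set m : ℝ := min A₀ AN with hm
  have ham : ∀ x, ‖a x‖ ≤ m := fun x =>
    le_min (hA₀ x) (by simpa using hAN x 0 (Nat.zero_le _))
  have hm0 : 0 ≤ m := le_min hA₀0 hAN0
  rcases hm0.eq_or_lt with hm00 | hmpos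
  · have haz : ∀ x, a x = 0 := fun x => norm_le_zero_iff.1 (hm00 ▸ ham x)
    simp only [haz, Complex.ofReal_zero, zero_mul, integral_zero, norm_zero]
    positivity
  set lam : ℝ := (AN / m + GN) ^ ((N : ℝ)⁻¹) with hlam
  have hbase : 0 < AN / m + GN :=
    add_pos_of_pos_of_nonneg (div_pos (hmpos.trans_le (min_le_right _ _)) hmpos) hGN0
  have hlam0 : 0 < lam := Real.rpow_pos_of_pos hbase _
  have hlamN : lam ^ N = AN / m + GN := Real.rpow_inv_natCast_pow hbase.le (by omega)
  have hmlam : m * lam ^ N = AN + m * GN := by rw [hlamN]; field_simp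
  have haB : GrowthBound N (3 ^ N ^ 2 * m) lam a :=
    GrowthBound.of_interpolation ha hlam0 (fun j hj => ⟨AN, fun x => hAN x j hj⟩) ham fun x =>
      (hAN x N le_rfl).trans (by rw [hmlam]; exact le_add_of_nonneg_right (by positivity))
  have hξB : GrowthBound N (3 ^ N ^ 2 * C₀) lam (fderiv ℝ ξ) :=
    GrowthBound.of_interpolation (hξ.fderiv_right (by simp)) hlam0
      (fun j hj => ⟨GN, fun x => hGN x j hj⟩) hξC fun x =>
      (hGN x N le_rfl).trans (by
        have h1 : GN ≤ lam ^ N := by rw [hlamN]; exact le_add_of_nonneg_left (by positivity)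
        nlinarith)
  have hunit : ∀ x, IsUnit (fderiv ℝ ξ x) ∧ ‖Ring.inverse (fderiv ℝ ξ x)‖ ≤ C₀ := fun x => by
    obtain ⟨B, h1, h2, h3⟩ := hξinv x
    let w : (V3 →L[ℝ] V3)ˣ := ⟨fderiv ℝ ξ x, B, h1, h2⟩
    have hw : Ring.inverse (fderiv ℝ ξ x) = B := Ring.inverse_unit w
    exact ⟨w.isUnit, hw ▸ h3⟩
  have hinvB := hK' (fderiv ℝ ξ) lam hlam0.le hξB (fun x => (hunit x).1) (fun x => (hunit x).2)
  set q : V3 := fun i => (k i : ℝ) / κ ^ 2 with hq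
  have hqn : ‖q‖ ≤ κ⁻¹ := (pi_norm_le_iff_of_nonneg (by positivity)).2 fun i => by
    rw [hq, Real.norm_eq_abs, abs_div, abs_of_pos (pow_pos hκ0 2), div_le_iff₀ (by positivity)]
    refine (hkκ i).trans_eq ?_
    field_simp
  have happ : ‖ContinuousLinearMap.apply ℝ V3 q‖ ≤ κ⁻¹ :=
    (ContinuousLinearMap.opNorm_le_bound _ (norm_nonneg q) fun A => by
      rw [mul_comm]; exact A.le_opNorm q).trans hqn
  have hbB : GrowthBound N (κ⁻¹ * |K'|) lam fun x => Ring.inverse (fderiv ℝ ξ x) q :=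
    (hinvB.clm_comp (ContinuousLinearMap.apply ℝ V3 q)).mono_const hlam0.le
      (mul_le_mul happ (le_abs_self _) hinvB.nonneg (by positivity))
  have hDξp := perSpace_fderiv_of_perSpace_mod hξ.continuous hξp
  set φ : V3 → ℝ := fun x => ∑ i, (k i : ℝ) * ξ x i with hφ
  have hφc : ContDiff ℝ (⊤ : ℕ∞) φ := by
    refine ContDiff.sum fun i _ => contDiff_const.mul ?_
    exact contDiff_pi.1 hξ i
  have hφd : ∀ x v, fderiv ℝ φ x v = ∑ i, (k i : ℝ) * fderiv ℝ ξ x v i := fun x v => by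
    have hd : HasFDerivAt φ (∑ i, (k i : ℝ) • (ContinuousLinearMap.proj (R := ℝ)
        (φ := fun _ : Fin 3 => ℝ) i).comp (fderiv ℝ ξ x)) x :=
      HasFDerivAt.fun_sum fun i _ => ((ContinuousLinearMap.proj (R := ℝ)
        (φ := fun _ : Fin 3 => ℝ) i).hasFDerivAt.comp x
          (hξ.differentiable (by simp) x).hasFDerivAt).const_mul (k i : ℝ)
    rw [hd.fderiv]
    simp
  have hφp : PerSpace fun x => Complex.exp (Complex.I * (φ x : ℂ)) := fun x v => by
    obtain ⟨w, hw⟩ := hξp x v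
    refine Complex.exp_eq_exp_iff_exists_int.2 ⟨∑ i, k i * w i, ?_⟩
    simp only [hφ, hw]
    push_cast
    simp only [mul_add, Finset.sum_add_distrib, Finset.mul_sum, Finset.sum_mul]
    congr 1
    exact Finset.sum_congr rfl fun i _ => by ring
  have h1 : ∀ x, fderiv ℝ φ x (Ring.inverse (fderiv ℝ ξ x) q) = 1 := fun x => by
    have hx : fderiv ℝ ξ x (Ring.inverse (fderiv ℝ ξ x) q) = q :=
      DFunLike.congr_fun (Ring.mul_inverse_cancel _ (hunit x).1) q
    rw [hφd, hx]
    have hs : ∑ i, (k i : ℝ) * q i = (∑ i, (k i : ℝ) ^ 2) / κ ^ 2 := by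
      rw [Finset.sum_div]
      exact Finset.sum_congr rfl fun i _ => by simp only [hq]; ring
    rw [hs, ← hκsq, div_self (by positivity)]
  refine (norm_integral_mul_exp_le hlam0.le hbB hφc
    (fun x v => by simp only [hDξp x v]) hφp h1 le_rfl haB hap).trans ?_
  calc (2 * Real.pi) ^ 3 * (3 ^ N ^ 2 * m) * (‖traceCLM‖ * 2 ^ N * (κ⁻¹ * |K'|) * lam) ^ N
      = (2 * Real.pi) ^ 3 * 3 ^ N ^ 2 * (m * lam ^ N) * (D * κ⁻¹) ^ N := by
        rw [hD, mul_pow _ lam]; ring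
    _ = (2 * Real.pi) ^ 3 * 3 ^ N ^ 2 * D ^ N * (AN + m * GN) / κ ^ N := by
        rw [hmlam, mul_pow D, inv_pow]; ring
    _ ≤ ((2 * Real.pi) ^ 3 * 3 ^ N ^ 2 * D ^ N + 1) * (AN + A₀ * GN) / κ ^ N := by
        gcongr
        · exact le_add_of_nonneg_right zero_le_one
        · exact min_le_left _ _
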